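/- For every integer r ≥ 1, the sum over n from 3 to infinity of (H_{n−1}² − H_{n−1}^{(2)})·h_n^{(r)}/(n·C(n+r, r)) equals (H_r² + H_r^{(2)})·π²/6 + 2·H_r·ζ(3) + π⁴/45. -/

import Mathlib

open Finset Real

noncomputable def H (n : ℕ) : ℝ := ∑ i ∈ Finset.range n, 1/((i:ℝ)+1)

noncomputable def H2 (n : ℕ) : ℝ := ∑ i ∈ Finset.range n, 1/((i:ℝ)+1)^2

noncomputable def H3 (n : ℕ) : ℝ := ∑ i ∈ Finset.range n, 1/((i:ℝ)+1)^3

noncomputable def hh (r n : ℕ) : ℝ := (Nat.choose (n+r-1) (r-1)) * (H (n+r-1) - H (r-1))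

noncomputable def zeta3 : ℝ := ∑' n : ℕ, 1/((n:ℝ)+1)^3

open Filter Topology

/-! ### Harmonic numbers -/

lemma H_succ (n : ℕ) : H (n+1) = H n + 1/((n:ℝ)+1) := Finset.sum_range_succ _ _

lemma H2_succ (n : ℕ) : H2 (n+1) = H2 n + 1/((n:ℝ)+1)^2 := Finset.sum_range_succ _ _

lemma H_mono : Monotone H := monotone_nat_of_le_succ fun n => by
  rw [H_succ]
  have : (0:ℝ) ≤ 1/((n:ℝ)+1) := by positivity
  linarith

lemma H_nonneg (n : ℕ) : 0 ≤ H n := Finset.sum_nonneg fun i _ => by positivity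

lemma H_le_one_add_log (n : ℕ) : H n ≤ 1 + Real.log n := by
  have h := harmonic_le_one_add_log n
  simpa [harmonic, H] using h

lemma tendsto_H_pow_div (k r : ℕ) :
    Tendsto (fun n : ℕ => H (n+r) ^ k / ((n:ℝ)+1+r)) atTop (𝓝 0) := by
  have hlog : Tendsto (fun x : ℝ => Real.log x ^ k / (Real.exp (-1) * x + 0)) atTop (𝓝 0) :=
    Real.tendsto_pow_log_div_mul_add_atTop _ _ _ (Real.exp_pos _).ne'
  have hcast : Tendsto (fun n : ℕ => Real.exp 1 * ((n:ℝ)+1+r)) atTop atTop := by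
    refine Tendsto.const_mul_atTop (Real.exp_pos 1) ?_
    exact tendsto_atTop_add_const_right _ _
      (tendsto_atTop_add_const_right _ _ tendsto_natCast_atTop_atTop)
  refine squeeze_zero (fun n => ?_) (fun n => ?_) (hlog.comp hcast)
  · have := H_nonneg (n+r)
    positivity
  · have hpos : (0:ℝ) < (n:ℝ)+1+r := by positivity
    have hden : Real.exp (-1) * (Real.exp 1 * ((n:ℝ)+1+r)) + 0 = (n:ℝ)+1+r := by
      rw [← mul_assoc, ← Real.exp_add]; simp
    simp only [Function.comp_apply]
    rw [hden]
    have hle : H (n+r) ≤ Real.log (Real.exp 1 * ((n:ℝ)+1+r)) := by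
      rw [Real.log_mul (Real.exp_pos 1).ne' hpos.ne', Real.log_exp]
      refine (H_mono (Nat.le_succ _)).trans ((H_le_one_add_log (n+r+1)).trans (le_of_eq ?_))
      push_cast
      ring_nf
    have := H_nonneg (n+r)
    gcongr

/-! ### Elementary symmetric functions of `1, 1/2, …, 1/j` -/

/-- The elementary symmetric function of degree `k` in `1, 1/2, …, 1/j`. -/
noncomputable def harmonicEsymm : ℕ → ℕ → ℝ
  | 0, _ => 1
  | k+1, j => ∑ i ∈ Finset.range j, harmonicEsymm k i / ((i:ℝ)+1)

lemma harmonicEsymm_succ_succ (k j : ℕ) :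
    harmonicEsymm (k+1) (j+1) = harmonicEsymm (k+1) j + harmonicEsymm k j / ((j:ℝ)+1) :=
  Finset.sum_range_succ _ _

lemma harmonicEsymm_succ_zero (k : ℕ) : harmonicEsymm (k+1) 0 = 0 := by
  simp [harmonicEsymm]

lemma harmonicEsymm_nonneg (k j : ℕ) : 0 ≤ harmonicEsymm k j := by
  induction k generalizing j with
  | zero => simp [harmonicEsymm]
  | succ k ih => exact Finset.sum_nonneg fun i _ => div_nonneg (ih i) (by positivity)

lemma harmonicEsymm_le (k j : ℕ) : harmonicEsymm k j ≤ H j ^ k := by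
  induction k generalizing j with
  | zero => simp [harmonicEsymm]
  | succ k ih =>
    rw [pow_succ, H, Finset.mul_sum]
    refine Finset.sum_le_sum fun i hi => ?_
    rw [mul_one_div]
    have h : H i ≤ H j := H_mono (Finset.mem_range.1 hi).le
    have h' := pow_le_pow_left₀ (H_nonneg i) h k
    exact div_le_div_of_nonneg_right ((ih i).trans h') (by positivity)

lemma harmonicEsymm_one (j : ℕ) : harmonicEsymm 1 j = H j := by
  simp [harmonicEsymm, H]

lemma harmonicEsymm_two (j : ℕ) : harmonicEsymm 2 j = (H j ^ 2 - H2 j) / 2 := by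
  induction j with
  | zero => simp [harmonicEsymm, H, H2]
  | succ j ih =>
    rw [harmonicEsymm_succ_succ, ih, harmonicEsymm_one, H_succ, H2_succ]
    field_simp
    ring

/-! ### Summation by parts -/

lemma hasSum_of_eq {f g : ℕ → ℝ} {a b : ℝ} (h : HasSum f a) (hf : ∀ j, g j = f j)
    (hb : b = a) : HasSum g b := by
  rwa [hb, funext hf]

lemma tendsto_sum_mul_sub_succ {E D K : ℕ → ℝ} {w : ℝ} (hE : ∀ j, E (j+1) = E j + D j)
    (hlim : Tendsto (fun j => E j * K j) atTop (𝓝 0))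
    (hD : HasSum (fun j => D j * K (j+1)) w) :
    Tendsto (fun N => ∑ j ∈ Finset.range N, E j * (K j - K (j+1))) atTop
      (𝓝 (E 0 * K 0 + w)) := by
  have hparts : ∀ N, ∑ j ∈ Finset.range N, E j * (K j - K (j+1))
      = E 0 * K 0 - E N * K N + ∑ j ∈ Finset.range N, D j * K (j+1) := by
    intro N
    induction N with
    | zero => simp
    | succ N ih => rw [Finset.sum_range_succ, Finset.sum_range_succ, ih, hE]; ring
  simp_rw [hparts]
  simpa using (hlim.const_sub (E 0 * K 0)).add hD.tendsto_sum_nat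

/-! ### The sums `∑ e_k(1, …, 1/(n-1)) / n ^ 2` -/

/-- The reciprocal binomial coefficient `j! m! / (j+m)!`. -/
noncomputable def invChoose (m j : ℕ) : ℝ := 1 / (Nat.choose (j+m) m : ℝ)

lemma invChoose_nonneg (m j : ℕ) : 0 ≤ invChoose m j := by
  unfold invChoose; positivity

lemma invChoose_comm (m j : ℕ) : invChoose m j = invChoose j m := by
  rw [invChoose, invChoose, add_comm m j, Nat.choose_symm_add]

lemma invChoose_zero_right (m : ℕ) : invChoose m 0 = 1 := by simp [invChoose]

lemma invChoose_succ_succ (p j : ℕ) :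
    invChoose (p+1) (j+1) / ((j:ℝ)+1) =
      (invChoose (p+1) j - invChoose (p+1) (j+1)) / ((p:ℝ)+1) := by
  have h : ((j+p+2 : ℕ) : ℝ) * (Nat.choose (j+p+1) (p+1) : ℝ)
      = (Nat.choose (j+p+2) (p+1) : ℝ) * ((j:ℝ)+1) := by
    have h₁ := Nat.add_one_mul_choose_eq (j+p+1) j
    have h₂ : Nat.choose (j+p+1) j = Nat.choose (j+p+1) (p+1) :=
      Nat.choose_symm_of_eq_add (by ring)
    have h₃ : Nat.choose (j+p+2) (j+1) = Nat.choose (j+p+2) (p+1) :=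
      Nat.choose_symm_of_eq_add (by ring)
    simp only [add_assoc] at h₁ h₂ h₃ ⊢
    norm_num at h₁
    rw [h₂, h₃] at h₁
    exact_mod_cast h₁
  have hpos : (0:ℝ) < (Nat.choose (j+p+1) (p+1) : ℝ) := by
    exact_mod_cast Nat.choose_pos (by omega)
  have hpos' : (0:ℝ) < (Nat.choose (j+p+2) (p+1) : ℝ) := by
    exact_mod_cast Nat.choose_pos (by omega)
  have e₁ : j + (p+1) = j+p+1 := by ring
  have e₂ : j + 1 + (p+1) = j+p+2 := by ring
  rw [invChoose, invChoose, e₁, e₂]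
  push_cast at h
  field_simp
  linear_combination h

lemma invChoose_succ_le (p j : ℕ) : invChoose (p+1) j ≤ 1 / ((j:ℝ)+1) := by
  have h : j + 1 ≤ Nat.choose (j+(p+1)) (p+1) := by
    calc j + 1 = Nat.choose (j+1) j := by simp
      _ ≤ Nat.choose (j+(p+1)) j := Nat.choose_le_choose _ (by omega)
      _ = _ := Nat.choose_symm_add
  rw [invChoose]
  exact one_div_le_one_div_of_le (by positivity) (by exact_mod_cast h)

lemma tendsto_harmonicEsymm_mul_invChoose (k p : ℕ) :
    Tendsto (fun j => harmonicEsymm k j * invChoose (p+1) j) atTop (𝓝 0) := by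
  have h := tendsto_H_pow_div k 0
  simp only [add_zero, Nat.cast_zero] at h
  refine squeeze_zero (fun j => mul_nonneg (harmonicEsymm_nonneg _ _) (invChoose_nonneg _ _))
    (fun j => ?_) h
  rw [div_eq_mul_one_div]
  exact mul_le_mul (harmonicEsymm_le k j) (invChoose_succ_le p j) (invChoose_nonneg _ _)
    (pow_nonneg (H_nonneg j) k)

lemma hasSum_harmonicEsymm_mul_invChoose (k p : ℕ) :
    HasSum (fun j : ℕ => harmonicEsymm k j * (invChoose (p+1) (j+1) / ((j:ℝ)+1)))
      (1 / ((p:ℝ)+1)^(k+1)) := by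
  have hstep : ∀ k, ∀ w : ℝ, Tendsto (fun N => ∑ j ∈ Finset.range N,
      harmonicEsymm k j * (invChoose (p+1) j - invChoose (p+1) (j+1))) atTop (𝓝 w) →
      HasSum (fun j : ℕ => harmonicEsymm k j * (invChoose (p+1) (j+1) / ((j:ℝ)+1)))
        (w / ((p:ℝ)+1)) := by
    intro k w hw
    rw [hasSum_iff_tendsto_nat_of_nonneg fun j => mul_nonneg (harmonicEsymm_nonneg _ _)
      (div_nonneg (invChoose_nonneg _ _) (by positivity))]
    simpa only [invChoose_succ_succ, ← mul_div_assoc, Finset.sum_div] using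
      hw.div_const ((p:ℝ)+1)
  induction k with
  | zero =>
    have h := tendsto_sum_mul_sub_succ (E := harmonicEsymm 0) (D := fun _ => 0)
      (K := invChoose (p+1)) (w := 0) (by simp [harmonicEsymm])
      (tendsto_harmonicEsymm_mul_invChoose 0 p) (by simp [hasSum_zero])
    simpa [harmonicEsymm, invChoose_zero_right] using hstep 0 _ h
  | succ k ih =>
    have h := tendsto_sum_mul_sub_succ (K := invChoose (p+1)) (w := 1 / ((p:ℝ)+1)^(k+1))
      (harmonicEsymm_succ_succ k)
      (tendsto_harmonicEsymm_mul_invChoose (k+1) p) (by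
        convert ih using 2 with j
        ring)
    convert hstep (k+1) _ h using 1
    rw [harmonicEsymm_succ_zero, pow_succ _ (k+1)]
    field_simp
    ring

lemma hasSum_invChoose_div (j : ℕ) :
    HasSum (fun p : ℕ => invChoose (p+1) (j+1) / ((p:ℝ)+1)) (1 / ((j:ℝ)+1)) := by
  have h := hasSum_harmonicEsymm_mul_invChoose 0 j
  simpa [harmonicEsymm, invChoose_comm] using h

/-- The duality `ζ(2, {1}^k) = ζ(k+2)`. -/
lemma hasSum_harmonicEsymm_div_sq (k : ℕ) {z : ℝ}
    (hz : HasSum (fun p : ℕ => 1 / ((p:ℝ)+1)^(k+2)) z) :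
    HasSum (fun j : ℕ => harmonicEsymm k j * (1 / ((j:ℝ)+1)^2)) z := by
  let f : ℕ × ℕ → ℝ := fun x =>
    harmonicEsymm k x.2 * (invChoose (x.1+1) (x.2+1) / ((x.2:ℝ)+1)) / ((x.1:ℝ)+1)
  have hnn : 0 ≤ f := fun x => div_nonneg (mul_nonneg (harmonicEsymm_nonneg _ _)
    (div_nonneg (invChoose_nonneg _ _) (by positivity))) (by positivity)
  have hrow : ∀ p, HasSum (fun j => f (p, j)) (1 / ((p:ℝ)+1)^(k+2)) := by
    intro p
    refine hasSum_of_eq ((hasSum_harmonicEsymm_mul_invChoose k p).div_const ((p:ℝ)+1))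
      (fun _ => rfl) ?_
    rw [pow_succ _ (k+1)]
    field_simp
  have hcol : ∀ j, HasSum (fun p => f (p, j)) (harmonicEsymm k j * (1 / ((j:ℝ)+1)^2)) := by
    intro j
    refine hasSum_of_eq ((hasSum_invChoose_div j).mul_left (harmonicEsymm k j / ((j:ℝ)+1)))
      (fun p => ?_) ?_
    · simp only [f]
      ring
    · field_simp
  have hsum : Summable f := by
    rw [summable_prod_of_nonneg hnn]
    refine ⟨fun p => (hrow p).summable, ?_⟩
    simpa only [(hrow _).tsum_eq] using hz.summable
  have hf : HasSum f z := by
    rw [← (hsum.hasSum.prod_fiberwise hrow).unique hz]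
    exact hsum.hasSum
  exact HasSum.prod_fiberwise ((Equiv.prodComm ℕ ℕ).hasSum_iff.2 hf) hcol

/-! ### The recursion in `r` -/

/-- The weight `h_n^{(r)} / (n C(n+r, r))` at `n = j+1`, with its limit value at `r = 0`. -/
noncomputable def hyperWeight : ℕ → ℕ → ℝ
  | 0, j => 1 / ((j:ℝ)+1)^2
  | r+1, j => (H (j+r+1) - H r) * ((r:ℝ)+1) / (((j:ℝ)+1) * ((j:ℝ)+r+2))

lemma hyperWeight_nonneg (r j : ℕ) : 0 ≤ hyperWeight r j := by
  cases r with
  | zero => unfold hyperWeight; positivity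
  | succ r =>
    have h : 0 ≤ H (j+r+1) - H r := sub_nonneg.2 (H_mono (by omega))
    unfold hyperWeight
    positivity

lemma hyperWeight_succ (r j : ℕ) :
    hyperWeight (r+1) j = hyperWeight r j +
      ((H (j+r) - H r) / ((j:ℝ)+1+r) - (H (j+1+r) - H r) / (((j+1:ℕ):ℝ)+1+r)) := by
  have e : j + 1 + r = j + r + 1 := by ring
  cases r with
  | zero =>
    have h₀ : H 0 = 0 := by simp [H]
    simp only [hyperWeight, add_zero, H_succ, h₀]
    push_cast
    field_simp
    ring
  | succ r =>
    have e' : j + (r+1) = j + r + 1 := by ring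
    simp only [hyperWeight, e, e', H_succ (j+r+1), H_succ r]
    push_cast
    have h₁ : (j:ℝ)+r+1+1 ≠ 0 := by positivity
    field_simp
    ring

lemma tendsto_harmonicEsymm_mul_sub_div (k r : ℕ) :
    Tendsto (fun j : ℕ => harmonicEsymm k j * ((H (j+r) - H r) / ((j:ℝ)+1+r)))
      atTop (𝓝 0) := by
  have hH : ∀ j, 0 ≤ H (j+r) - H r := fun j => sub_nonneg.2 (H_mono (by omega))
  refine squeeze_zero (fun j => mul_nonneg (harmonicEsymm_nonneg _ _)
    (div_nonneg (hH j) (by positivity))) (fun j => ?_) (tendsto_H_pow_div (k+1) r)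
  rw [← mul_div_assoc, pow_succ]
  have h₁ : harmonicEsymm k j ≤ H (j+r) ^ k :=
    (harmonicEsymm_le k j).trans (pow_le_pow_left₀ (H_nonneg j) (H_mono (by omega)) k)
  have h₂ : H (j+r) - H r ≤ H (j+r) := by linarith [H_nonneg r]
  exact div_le_div_of_nonneg_right
    (mul_le_mul h₁ h₂ (hH j) (pow_nonneg (H_nonneg _) k)) (by positivity)

lemma hasSum_hyperWeight_succ {k r : ℕ} {D : ℕ → ℝ} {v w : ℝ}
    (hD : ∀ j, harmonicEsymm k (j+1) = harmonicEsymm k j + D j)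
    (hv : HasSum (fun j => harmonicEsymm k j * hyperWeight r j) v)
    (hw : HasSum (fun j => D j * ((H (j+1+r) - H r) / (((j+1:ℕ):ℝ)+1+r))) w) :
    HasSum (fun j => harmonicEsymm k j * hyperWeight (r+1) j) (v + w) := by
  rw [hasSum_iff_tendsto_nat_of_nonneg fun j => mul_nonneg (harmonicEsymm_nonneg _ _)
    (hyperWeight_nonneg _ _)]
  have h := hv.tendsto_sum_nat.add (tendsto_sum_mul_sub_succ
    (K := fun j => (H (j+r) - H r) / ((j:ℝ)+1+r)) hD
    (tendsto_harmonicEsymm_mul_sub_div k r) hw)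
  simpa only [hyperWeight_succ, mul_add, Finset.sum_add_distrib, zero_add, sub_self, zero_div,
    mul_zero] using h

lemma hasSum_hyperWeight_succ_of_pred {k r : ℕ} {v w : ℝ}
    (hv : HasSum (fun j => harmonicEsymm (k+1) j * hyperWeight r j) v)
    (hw : HasSum (fun j => harmonicEsymm k j * hyperWeight (r+1) j) w) :
    HasSum (fun j => harmonicEsymm (k+1) j * hyperWeight (r+1) j) (v + w / ((r:ℝ)+1)) := by
  refine hasSum_hyperWeight_succ (harmonicEsymm_succ_succ k) hv ?_
  refine hasSum_of_eq (hw.div_const ((r:ℝ)+1)) (fun j => ?_) rfl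
  have e : j + 1 + r = j + r + 1 := by ring
  rw [hyperWeight, e]
  push_cast
  have h₁ : (j:ℝ)+r+2 ≠ 0 := by positivity
  have h₂ : (j:ℝ)+1+1+r ≠ 0 := by positivity
  field_simp
  ring

lemma hasSum_one_div_succ_pow {k : ℕ} {z : ℝ} (hk : k ≠ 0)
    (h : HasSum (fun n : ℕ => 1 / (n:ℝ)^k) z) :
    HasSum (fun p : ℕ => 1 / ((p:ℝ)+1)^k) z := by
  have h' := (hasSum_nat_add_iff' 1).2 h
  simpa [hk] using h'

lemma hasSum_hyperWeight_zero (r : ℕ) :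
    HasSum (fun j => harmonicEsymm 0 j * hyperWeight r j) (π^2/6) := by
  induction r with
  | zero =>
    exact hasSum_harmonicEsymm_div_sq 0 (hasSum_one_div_succ_pow two_ne_zero hasSum_zeta_two)
  | succ r ih =>
    have h := hasSum_hyperWeight_succ (D := fun _ => 0) (w := 0) (by simp [harmonicEsymm]) ih
      (by simp [hasSum_zero])
    simpa using h

lemma hasSum_hyperWeight_one (r : ℕ) :
    HasSum (fun j => harmonicEsymm 1 j * hyperWeight r j) (H r * (π^2/6) + zeta3) := by
  induction r with
  | zero =>
    have hs : Summable (fun p : ℕ => 1 / ((p:ℝ)+1)^3) :=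
      (hasSum_one_div_succ_pow three_ne_zero
        (Real.summable_one_div_nat_pow.2 (by norm_num)).hasSum).summable
    simpa [H, hyperWeight] using hasSum_harmonicEsymm_div_sq 1 (z := zeta3) hs.hasSum
  | succ r ih =>
    convert hasSum_hyperWeight_succ_of_pred ih (hasSum_hyperWeight_zero (r+1)) using 1
    rw [H_succ]
    ring

lemma hasSum_hyperWeight_two (r : ℕ) :
    HasSum (fun j => harmonicEsymm 2 j * hyperWeight r j)
      ((H r ^ 2 + H2 r) / 2 * (π^2/6) + H r * zeta3 + π^4/90) := by
  induction r with
  | zero =>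
    simpa [H, H2, hyperWeight] using
      hasSum_harmonicEsymm_div_sq 2 (hasSum_one_div_succ_pow four_ne_zero hasSum_zeta_four)
  | succ r ih =>
    convert hasSum_hyperWeight_succ_of_pred ih (hasSum_hyperWeight_one (r+1)) using 1
    rw [H_succ, H2_succ]
    field_simp
    ring

lemma hh_div_eq_hyperWeight (r n : ℕ) :
    hh (r+1) (n+1) / (((n:ℝ)+1) * (Nat.choose (n+1+(r+1)) (r+1) : ℝ)) = hyperWeight (r+1) n := by
  have h : ((n:ℝ)+r+2) * (Nat.choose (n+r+1) r : ℝ)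
      = (Nat.choose (n+r+2) (r+1) : ℝ) * ((r:ℝ)+1) := by
    exact_mod_cast Nat.add_one_mul_choose_eq (n+r+1) r
  have hpos : (0:ℝ) < (Nat.choose (n+r+2) (r+1) : ℝ) := by
    exact_mod_cast Nat.choose_pos (by omega)
  have e₁ : n + 1 + (r+1) - 1 = n + r + 1 := by omega
  have e₂ : n + 1 + (r+1) = n + r + 2 := by ring
  rw [hh, hyperWeight, e₁, e₂, Nat.add_sub_cancel]
  have h₁ : (n:ℝ)+r+2 ≠ 0 := by positivity
  field_simp
  linear_combination (H (n+r+1) - H r) * h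

theorem stmt15 (r : ℕ) (hr : 1 ≤ r) :
    ∑' n : ℕ, ((H (n+2))^2 - H2 (n+2)) * hh r (n+3) / (((n:ℝ)+3) * (Nat.choose (n+3+r) r : ℝ))
      = ((H r)^2 + H2 r) * Real.pi^2/6 + 2 * H r * zeta3 + Real.pi^4/45 := by
  obtain ⟨s, rfl⟩ := Nat.exists_eq_add_of_le' hr
  have h := ((hasSum_nat_add_iff' 2).2 (hasSum_hyperWeight_two (s+1))).mul_left 2
  convert h.tsum_eq using 1
  · refine tsum_congr fun n => ?_
    rw [← hh_div_eq_hyperWeight, harmonicEsymm_two]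
    push_cast
    ring_nf
  · simp [Finset.sum_range_succ, harmonicEsymm]
    ring
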